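/- Let ε_1 = ε_2 = −1, ε_3 = ε_4 = 1, and on ℂ⁴ × ℝ consider the vector fields L̄_j = ∂/∂z̄_j − i ε_j z_j ∂/∂x, j = 1,...,4. If u : ℂ⁴ × ℝ → ℂ is a smooth compactly supported function satisfying L̄_j u = 0 for all j = 1,...,4 (i.e. u is a compactly supported CR function on the hypersurface M = {y = |z_1|² + |z_2|² − |z_3|² − |z_4|²} ⊂ ℂ⁵, identified with ℂ⁴ × ℝ), then u ≡ 0. -/

import Mathlib

open MeasureTheory Complex Finset

noncomputable section

/-- The signs ε₁ = ε₂ = −1, ε₃ = ε₄ = 1. -/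
def eps : Fin 4 → ℝ := ![-1, -1, 1, 1]

/-- Wirtinger derivative `∂u/∂z̄_j` in the `z` variables on `ℂ⁴ × ℝ`. -/
def wbarP (j : Fin 4) (u : (Fin 4 → ℂ) × ℝ → ℂ) (p : (Fin 4 → ℂ) × ℝ) : ℂ :=
  (1 / 2 : ℂ) * (fderiv ℝ u p (Pi.single j 1, 0)
    + Complex.I * fderiv ℝ u p (Pi.single j Complex.I, 0))

/-- Wirtinger derivative `∂u/∂z_j` in the `z` variables on `ℂ⁴ × ℝ`. -/
def wholP (j : Fin 4) (u : (Fin 4 → ℂ) × ℝ → ℂ) (p : (Fin 4 → ℂ) × ℝ) : ℂ :=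
  (1 / 2 : ℂ) * (fderiv ℝ u p (Pi.single j 1, 0)
    - Complex.I * fderiv ℝ u p (Pi.single j Complex.I, 0))

/-- The derivative `∂u/∂x` in the real variable on `ℂ⁴ × ℝ`. -/
def dxP (u : (Fin 4 → ℂ) × ℝ → ℂ) (p : (Fin 4 → ℂ) × ℝ) : ℂ :=
  fderiv ℝ u p (0, 1)

/-- The vector field `L̄_j = ∂/∂z̄_j − i ε_j z_j ∂/∂x`. -/
def Lbar (j : Fin 4) (u : (Fin 4 → ℂ) × ℝ → ℂ) (p : (Fin 4 → ℂ) × ℝ) : ℂ :=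
  wbarP j u p - Complex.I * (eps j : ℂ) * p.1 j * dxP u p

/-- The vector field `L_j = ∂/∂z_j + i ε_j z̄_j ∂/∂x`. -/
def Lhol (j : Fin 4) (u : (Fin 4 → ℂ) × ℝ → ℂ) (p : (Fin 4 → ℂ) × ℝ) : ℂ :=
  wholP j u p + Complex.I * (eps j : ℂ) * (starRingEnd ℂ) (p.1 j) * dxP u p

/-- The weight `e^{|z|²}`. -/
def wgtP (p : (Fin 4 → ℂ) × ℝ) : ℝ := Real.exp (∑ j, Complex.normSq (p.1 j))

/-!
The Fourier transform in `x` turns the CR equation for a weight `φ` into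
`∂̄û = -2πξ (∂̄φ) û`, so `exp (2πξφ) û` is holomorphic on complex lines in the direction of the
derivative. It is also compactly supported, hence zero by Liouville's theorem. So `û = 0`, and
`u = 0` by Fourier inversion.
-/

open scoped FourierTransform Real

variable {E F : Type*} [NormedAddCommGroup E] [NormedAddCommGroup F]

section ParametricIntegral

variable {X : Type*} [TopologicalSpace X] [T2Space X]

lemma hasCompactSupport_slice {Y Z : Type*} [TopologicalSpace Y] [T2Space Y] [Zero Z]
    {g : Y × X → Z} (hg : HasCompactSupport g) (y : Y) : HasCompactSupport fun x => g (y, x) :=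
  hg.comp_isClosedEmbedding <| Function.LeftInverse.isClosedEmbedding (f := Prod.snd)
    (fun _ => rfl) (by fun_prop) (by fun_prop)

variable [MeasurableSpace X] [OpensMeasurableSpace X] {μ : Measure X} [IsFiniteMeasureOnCompacts μ]

lemma integrable_slice {Y : Type*} [TopologicalSpace Y] [T2Space Y] {g : Y × X → F}
    (hg : Continuous g) (hgc : HasCompactSupport g) (y : Y) :
    Integrable (fun x => g (y, x)) μ :=
  (hg.comp (.prodMk_right y)).integrable_of_hasCompactSupport (hasCompactSupport_slice hgc y)

lemma hasFDerivAt_integral_of_hasCompactSupport {𝕜 : Type*} [RCLike 𝕜] [NormedSpace 𝕜 E]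
    [NormedSpace ℝ F] [NormedSpace 𝕜 F] {f : E × X → F} {f' : E × X → E →L[𝕜] F}
    (hf : Continuous f) (hfc : HasCompactSupport f)
    (hf' : Continuous f') (hfc' : HasCompactSupport f')
    (hderiv : ∀ z x, HasFDerivAt (fun z => f (z, x)) (f' (z, x)) z) (z : E) :
    HasFDerivAt (fun z => ∫ x, f (z, x) ∂μ) (∫ x, f' (z, x) ∂μ) z := by
  obtain ⟨C, hC⟩ := hfc'.exists_bound_of_continuous hf'
  have hK : IsCompact (Prod.snd '' tsupport f') := hfc'.isCompact.image continuous_snd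
  refine hasFDerivAt_integral_of_dominated_of_fderiv_le (F := fun z x => f (z, x))
    (F' := fun z x => f' (z, x)) (bound := (Prod.snd '' tsupport f').indicator fun _ => C)
    Filter.univ_mem (.of_forall fun z => (integrable_slice hf hfc z).aestronglyMeasurable)
    (integrable_slice hf hfc z) (integrable_slice hf' hfc' z).aestronglyMeasurable
    (.of_forall fun x z _ => ?_) ?_
    (.of_forall fun x z _ => hderiv z x)
  · refine Set.le_indicator_apply (fun _ => hC (z, x)) fun hx => ?_
    rw [image_eq_zero_of_notMem_tsupport fun h => hx ⟨_, h, rfl⟩, norm_zero]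
  · exact (integrable_indicator_iff hK.measurableSet).2 (integrableOn_const hK.measure_lt_top.ne)

end ParametricIntegral

variable [NormedSpace ℂ F]

section Fourier

variable {V : Type*} [NormedAddCommGroup V] [InnerProductSpace ℝ V] [FiniteDimensional ℝ V]
  [MeasurableSpace V] [BorelSpace V]

lemma fourier_fun_const_smul (c : ℂ) (f : V → F) (ξ : V) :
    𝓕 (fun x => c • f x) ξ = c • 𝓕 f ξ :=
  congrFun (VectorFourier.fourierIntegral_const_smul _ _ _ f c) ξ

lemma fourier_fun_add {f g : V → F} (hf : Integrable f) (hg : Integrable g) (ξ : V) :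
    𝓕 (fun x => f x + g x) ξ = 𝓕 f ξ + 𝓕 g ξ :=
  congrFun (VectorFourier.fourierIntegral_add Real.continuous_fourierChar continuous_inner hf hg) ξ

lemma hasCompactSupport_fourier_slice {Y : Type*} [TopologicalSpace Y] [T2Space Y] {g : Y × V → F}
    (hg : HasCompactSupport g) (ξ : V) : HasCompactSupport fun y => 𝓕 (fun x => g (y, x)) ξ := by
  refine .intro (hg.isCompact.image continuous_fst) fun y hy => ?_
  have hslice (x : V) : g (y, x) = 0 :=
    image_eq_zero_of_notMem_tsupport fun h => hy ⟨_, h, rfl⟩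
  simp only [Real.fourier_eq, hslice, smul_zero, integral_zero]

lemma eq_zero_of_fourier_eq_zero [CompleteSpace F] {f : V → F} (hf : Continuous f)
    (hfi : Integrable f) (h : 𝓕 f = 0) : f = 0 := by
  rw [← hf.fourierInv_fourier_eq hfi (h ▸ integrable_zero V F volume), h]
  ext x
  simp only [Real.fourierInv_eq, Pi.zero_apply, smul_zero, integral_zero]

end Fourier

variable [NormedSpace ℂ E]

section Dbar

/-- The Wirtinger derivative `∂f/∂z̄` of `f` at `z` in the complex direction `v`. -/
def dbar (f : E → F) (v z : E) : F :=
  (1 / 2 : ℂ) • (fderiv ℝ f z v + I • fderiv ℝ f z (I • v))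

lemma dbar_eq_of_hasFDerivAt {f : E → F} {f' : E →L[ℝ] F} {z : E} (hf : HasFDerivAt f f' z)
    (v : E) :
    dbar f v z = (1 / 2 : ℂ) • (f' v + I • f' (I • v)) := by
  rw [dbar, hf.fderiv]

lemma dbar_smul {f : E → ℂ} {g : E → F} {z : E} (hf : DifferentiableAt ℝ f z)
    (hg : DifferentiableAt ℝ g z) (v : E) :
    dbar (fun z => f z • g z) v z = f z • dbar g v z + dbar f v z • g z := by
  rw [dbar_eq_of_hasFDerivAt (f := fun z => f z • g z) (hf.hasFDerivAt.smul hg.hasFDerivAt),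
    dbar, dbar]
  simp only [add_apply, smul_apply, ContinuousLinearMap.smulRight_apply, smul_eq_mul]
  module

lemma dbar_cexp_const_mul {φ : E → ℂ} {z : E} (hφ : DifferentiableAt ℝ φ z) (c : ℂ) (v : E) :
    dbar (fun z => cexp (c * φ z)) v z = (cexp (c * φ z) * c) * dbar φ v z := by
  rw [dbar_eq_of_hasFDerivAt (hφ.hasFDerivAt.const_mul c).cexp, dbar]
  simp only [smul_apply, smul_eq_mul]
  ring

lemma dbar_comp_line {f : E → F} {a v : E} {w : ℂ} (hf : DifferentiableAt ℝ f (a + w • v)) :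
    dbar (fun w : ℂ => f (a + w • v)) 1 w = dbar f v (a + w • v) := by
  have hline : HasFDerivAt (fun w : ℂ => a + w • v)
      ((ContinuousLinearMap.toSpanSingleton ℂ v).restrictScalars ℝ) w :=
    ((ContinuousLinearMap.toSpanSingleton ℂ v).restrictScalars ℝ).hasFDerivAt.const_add a
  rw [dbar_eq_of_hasFDerivAt (f := fun w : ℂ => f (a + w • v)) (hf.hasFDerivAt.comp w hline), dbar]
  simp only [one_div, ContinuousLinearMap.comp_apply, ContinuousLinearMap.coe_restrictScalars',
    ContinuousLinearMap.toSpanSingleton_apply, one_smul, smul_eq_mul, mul_one, smul_add]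

lemma differentiableAt_complex_of_dbar_eq_zero {f : ℂ → F} {w : ℂ} (hf : DifferentiableAt ℝ f w)
    (h : dbar f 1 w = 0) : DifferentiableAt ℂ f w := by
  refine differentiableAt_complex_iff_differentiableAt_real.2 ⟨hf, ?_⟩
  have hsum : fderiv ℝ f w 1 + I • fderiv ℝ f w I = 0 := by
    simpa only [dbar, smul_eq_mul, mul_one] using
      (smul_eq_zero_iff_right (by norm_num : (1 / 2 : ℂ) ≠ 0)).1 h
  rw [eq_neg_of_add_eq_zero_left hsum, smul_neg, smul_smul, I_mul_I, neg_one_smul, neg_neg]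

lemma eq_zero_of_dbar_eq_zero_of_hasCompactSupport {f : E → F} {v : E} (hv : v ≠ 0)
    (hf : Differentiable ℝ f) (hfc : HasCompactSupport f) (h : ∀ z, dbar f v z = 0) : f = 0 := by
  ext a
  have hhol : Differentiable ℂ fun w : ℂ => f (a + w • v) := fun w =>
    differentiableAt_complex_of_dbar_eq_zero (by fun_prop) <|
      (dbar_comp_line (hf _)).trans (h _)
  have hline : Topology.IsClosedEmbedding fun w : ℂ => a + w • v :=
    (Homeomorph.addLeft a).isClosedEmbedding.comp (isClosedEmbedding_smul_left hv)
  simpa using hhol.apply_eq_of_tendsto_cocompact 0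
    (hfc.comp_isClosedEmbedding hline).is_zero_at_infty

end Dbar

section PartialFourier

variable {V : Type*} [NormedAddCommGroup V] {u : E × V → F}

section Slice

variable [NormedSpace ℝ V]

lemma hasFDerivAt_slice {z : E} {x : V} (hu : DifferentiableAt ℝ u (z, x)) :
    HasFDerivAt (fun z => u (z, x)) (fderiv ℝ u (z, x) ∘L .inl ℝ E V) z :=
  hu.hasFDerivAt.comp z (hasFDerivAt_prodMk_left z x)

lemma continuous_fderiv_comp_inl (hu : ContDiff ℝ 1 u) :
    Continuous fun p => fderiv ℝ u p ∘L .inl ℝ E V :=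
  (hu.continuous_fderiv one_ne_zero).clm_comp continuous_const

lemma hasCompactSupport_fderiv_comp_inl (hc : HasCompactSupport u) :
    HasCompactSupport fun p => fderiv ℝ u p ∘L .inl ℝ E V :=
  (hc.fderiv (𝕜 := ℝ)).comp_left (g := fun L => L ∘L .inl ℝ E V) (ContinuousLinearMap.zero_comp _)

end Slice

variable [InnerProductSpace ℝ V] [FiniteDimensional ℝ V] [MeasurableSpace V] [BorelSpace V]

lemma hasFDerivAt_fourier_slice (hu : ContDiff ℝ 1 u) (hc : HasCompactSupport u) (ξ : V) (z : E) :
    HasFDerivAt (fun z => 𝓕 (fun x => u (z, x)) ξ)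
      (𝓕 (fun x => fderiv ℝ u (z, x) ∘L .inl ℝ E V) ξ) z := by
  simp only [Real.fourier_eq]
  have hchar : Continuous fun p : E × V => Real.fourierChar (-inner ℝ p.2 ξ) := by fun_prop
  refine hasFDerivAt_integral_of_hasCompactSupport (μ := volume)
    (f := fun p => Real.fourierChar (-inner ℝ p.2 ξ) • u p)
    (f' := fun p => Real.fourierChar (-inner ℝ p.2 ξ) • (fderiv ℝ u p ∘L .inl ℝ E V))
    (hchar.smul hu.continuous) hc.smul_left
    (hchar.smul (continuous_fderiv_comp_inl hu))
    (hasCompactSupport_fderiv_comp_inl hc).smul_left (fun z x => ?_) z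
  exact (hasFDerivAt_slice (hu.differentiable one_ne_zero _)).const_smul
    (Real.fourierChar (-inner ℝ x ξ))

lemma dbar_fourier_slice (hu : ContDiff ℝ 1 u) (hc : HasCompactSupport u) (ξ : V) (v z : E) :
    dbar (fun z => 𝓕 (fun x => u (z, x)) ξ) v z = 𝓕 (fun x => dbar (fun z => u (z, x)) v z) ξ := by
  have hint : Integrable fun x => fderiv ℝ u (z, x) ∘L .inl ℝ E V :=
    integrable_slice (continuous_fderiv_comp_inl hu) (hasCompactSupport_fderiv_comp_inl hc) z
  have hint_apply (w : E) := hint.apply_continuousLinearMap w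
  have hslice (x : V) := dbar_eq_of_hasFDerivAt
    (hasFDerivAt_slice (hu.differentiable one_ne_zero (z, x))) v
  simp only [hslice]
  rw [dbar_eq_of_hasFDerivAt (hasFDerivAt_fourier_slice hu hc ξ z), fourier_fun_const_smul,
    fourier_fun_add (hint_apply v) ((hint_apply (I • v)).fun_smul I), fourier_fun_const_smul,
    Real.fourier_continuousLinearMap_apply hint, Real.fourier_continuousLinearMap_apply hint]

end PartialFourier

section RigidCR

/-- The vector field `∂/∂v̄ - i (∂φ/∂v̄) ∂/∂x` on `E × ℝ`. It annihilates the functions of `z`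
holomorphic in the direction `v` and the function `x + i φ(z)`, so for real-valued `φ` it is a
tangential Cauchy-Riemann operator of the rigid hypersurface `Im w = φ(z)` in `E × ℂ`, in the
coordinates `(z, Re w)`. -/
def rigidCR (φ : E → ℂ) (v : E) (u : E × ℝ → F) (p : E × ℝ) : F :=
  dbar (fun z => u (z, p.2)) v p.1 - (I * dbar φ v p.1) • deriv (fun x => u (p.1, x)) p.2

variable {u : E × ℝ → F}

lemma fourier_deriv_slice (hu : ContDiff ℝ 1 u) (hc : HasCompactSupport u) (z : E) (ξ : ℝ) :
    𝓕 (deriv fun x => u (z, x)) ξ = (2 * π * I * ξ) • 𝓕 (fun x => u (z, x)) ξ := by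
  have hslice : ContDiff ℝ 1 fun x => u (z, x) := hu.comp (contDiff_prodMk_right z)
  rw [Real.fourier_deriv (integrable_slice hu.continuous hc z) (hslice.differentiable one_ne_zero)
    ((hslice.continuous_deriv le_rfl).integrable_of_hasCompactSupport
      (hasCompactSupport_slice hc z).deriv)]

variable {φ : E → ℂ} {v : E}

lemma dbar_fourier_slice_of_rigidCR_eq_zero (hu : ContDiff ℝ 1 u) (hc : HasCompactSupport u)
    (hCR : ∀ p, rigidCR φ v u p = 0) (ξ : ℝ) (z : E) :
    dbar (fun z => 𝓕 (fun x => u (z, x)) ξ) v z =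
      (-(2 * π * ξ) * dbar φ v z) • 𝓕 (fun x => u (z, x)) ξ := by
  have hdbar : (fun x => dbar (fun z => u (z, x)) v z) =
      fun x => (I * dbar φ v z) • deriv (fun x => u (z, x)) x :=
    funext fun x => sub_eq_zero.1 (hCR (z, x))
  rw [dbar_fourier_slice hu hc, hdbar, fourier_fun_const_smul, fourier_deriv_slice hu hc, smul_smul]
  congr 1
  linear_combination (2 * π * ξ * dbar φ v z) * I_mul_I

lemma fourier_slice_eq_zero_of_rigidCR_eq_zero (hφ : Differentiable ℝ φ) (hv : v ≠ 0)
    (hu : ContDiff ℝ 1 u) (hc : HasCompactSupport u) (hCR : ∀ p, rigidCR φ v u p = 0)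
    (z : E) (ξ : ℝ) : 𝓕 (fun x => u (z, x)) ξ = 0 := by
  let uhat : E → F := fun z => 𝓕 (fun x => u (z, x)) ξ
  have huhat_diff : Differentiable ℝ uhat := fun z =>
    (hasFDerivAt_fourier_slice hu hc ξ z).differentiableAt
  have hexp_diff : Differentiable ℝ fun z => cexp (2 * π * ξ * φ z) := by fun_prop
  have hdbar (z : E) : dbar (fun z => cexp (2 * π * ξ * φ z) • uhat z) v z = 0 := by
    rw [dbar_smul (hexp_diff z) (huhat_diff z), dbar_cexp_const_mul (hφ z),
      dbar_fourier_slice_of_rigidCR_eq_zero hu hc hCR]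
    module
  have hzero := eq_zero_of_dbar_eq_zero_of_hasCompactSupport hv (hexp_diff.smul huhat_diff)
    (hasCompactSupport_fourier_slice hc ξ).smul_left hdbar
  exact (smul_eq_zero_iff_right (exp_ne_zero _)).1 (congrFun hzero z)

theorem no_compactly_supported_CR_functions_general [CompleteSpace F]
    (hφ : Differentiable ℝ φ) (hv : v ≠ 0) (hu : ContDiff ℝ 1 u)
    (hucs : HasCompactSupport u) (hCR : ∀ p, rigidCR φ v u p = 0) : u = 0 := by
  ext ⟨z, x⟩
  have hslice : (fun x => u (z, x)) = 0 :=
    eq_zero_of_fourier_eq_zero (hu.continuous.comp (.prodMk_right z))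
      (integrable_slice hu.continuous hucs z)
      (funext fun ξ => fourier_slice_eq_zero_of_rigidCR_eq_zero hφ hv hu hucs hCR z ξ)
  exact congrFun hslice x

end RigidCR

section QuadricWeight

variable {ι : Type*} (c : ℂ) (j : ι)

lemma differentiable_const_mul_normSq_apply [Finite ι] :
    Differentiable ℝ fun z : ι → ℂ => c * (normSq (z j) : ℂ) := by
  cases nonempty_fintype ι
  simp only [normSq_eq_conj_mul_self]
  fun_prop

lemma dbar_const_mul_normSq_apply [Fintype ι] [DecidableEq ι] (z : ι → ℂ) :
    dbar (fun z : ι → ℂ => c * (normSq (z j) : ℂ)) (Pi.single j 1) z = c * z j := by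
  have hproj : HasFDerivAt (fun z : ι → ℂ => z j) (.proj (R := ℝ) j) z := hasFDerivAt_apply j z
  have hconj : HasFDerivAt (fun z : ι → ℂ => (starRingEnd ℂ) (z j))
      ((conjCLE : ℂ →L[ℝ] ℂ) ∘L .proj (R := ℝ) j) z :=
    (conjCLE : ℂ →L[ℝ] ℂ).hasFDerivAt.comp z hproj
  simp only [normSq_eq_conj_mul_self]
  rw [dbar_eq_of_hasFDerivAt (f := fun z : ι → ℂ => c * ((starRingEnd ℂ) (z j) * z j))
    ((hconj.mul hproj).const_mul c)]
  simp only [one_div, smul_add, add_apply, smul_apply, ContinuousLinearMap.proj_apply,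
    Pi.single_eq_same, smul_eq_mul, mul_one, ContinuousLinearMap.comp_apply,
    ContinuousLinearEquiv.coe_coe, ContinuousAlgEquiv.coeCLE_apply, conjCAE_apply, map_one,
    Pi.smul_apply, conj_I, mul_neg]
  linear_combination 2⁻¹ * c * ((starRingEnd ℂ) (z j) - z j) * I_mul_I

end QuadricWeight

lemma rigidCR_eq_Lbar {u : (Fin 4 → ℂ) × ℝ → ℂ} {p : (Fin 4 → ℂ) × ℝ}
    (hu : DifferentiableAt ℝ u p) (j : Fin 4) :
    rigidCR (fun z => eps j * (normSq (z j) : ℂ)) (Pi.single j 1) u p = Lbar j u p := by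
  have hdx : HasDerivAt (fun x => u (p.1, x)) (dxP u p) p.2 :=
    (HasFDerivAt.comp (f := fun x : ℝ => (p.1, x)) p.2 hu.hasFDerivAt
      (hasFDerivAt_prodMk_right p.1 p.2)).hasDerivAt
  have hI : I • Pi.single j 1 = (Pi.single j I : Fin 4 → ℂ) := by
    rw [← Pi.single_smul, smul_eq_mul, mul_one]
  rw [rigidCR, dbar_eq_of_hasFDerivAt (hasFDerivAt_slice hu), dbar_const_mul_normSq_apply,
    hdx.deriv, Lbar, wbarP, hI]
  simp only [ContinuousLinearMap.comp_apply, ContinuousLinearMap.inl_apply, smul_eq_mul, mul_assoc]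

theorem no_compactly_supported_CR_functions
    (u : (Fin 4 → ℂ) × ℝ → ℂ) (hu : ContDiff ℝ (⊤ : ℕ∞) u) (hucs : HasCompactSupport u)
    (hCR : ∀ (j : Fin 4) (p : (Fin 4 → ℂ) × ℝ), Lbar j u p = 0) :
    u = 0 := by
  have hu₁ : ContDiff ℝ 1 u := hu.of_le (by simp)
  exact no_compactly_supported_CR_functions_general
    (differentiable_const_mul_normSq_apply (eps 0) 0) (Pi.single_ne_zero_iff.2 one_ne_zero) hu₁ hucs
    fun p => (rigidCR_eq_Lbar (hu₁.differentiable one_ne_zero p) 0).trans (hCR 0 p)
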